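/- (Typing soundness of the set-theoretic interpretation of HOL) For every well-typed HOL term `s` of type `T` and every assignment `α` defined on the type variables and typed term variables of `s`, the interpretation satisfies `⟦s⟧_α ∈ ⟦T⟧_α`. -/

import Mathlib

/-!
Typing soundness is proved by induction on the term, for all types and all valid assignments
at once. Both the equality constant and abstractions denote sets of the form
`{(x, y) ∈ A × B | p x y}`, so `pairSep_mem_funs` places them in a function space as soon as `p`
is functional from `A` to `B`. For an abstraction, functionality is the induction hypothesis at
the updated assignment, which is again valid (`ValidAssign.update`). Applications are handled by
`app_mem`: the value at a point of the domain of a set-theoretic function lies in its codomain.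
-/

/-!
Context: ZFC via Mathlib's `ZFSet`. `⊥ = ∅`, `⊤ = {∅}`, `𝔹 = {⊥, ⊤}`, `ω = ZFSet.omega`.
The function space `A ⇒ B` is `ZFSet.funs A B`; `app f x` is the unique `y` with
`(x, y) ∈ f`; `E A` is the curried equality relation on `A`. Deep embedding of HOL:
types are type variables, `Bool`, `Ind` and arrows; terms are typed variables, the
polymorphic equality constant, applications and abstractions, with the usual simple
typing rules. An assignment maps type variables to nonempty sets and typed term
variables to elements of the interpretation of their types.
-/

namespace HOLDeep

open Classical

/-- The set-theoretic Boolean `⊥ = ∅`. -/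
def bfalse : ZFSet := ∅

/-- The set-theoretic Boolean `⊤ = {∅}`. -/
def btrue : ZFSet := {∅}

/-- The set of Booleans `𝔹 = {⊥, ⊤}`. -/
def bools : ZFSet := {bfalse, btrue}

/-- `app f x`: the unique `y` such that `(x, y) ∈ f` (when it exists). -/
noncomputable def app (f x : ZFSet) : ZFSet :=
  if h : ∃! y, x.pair y ∈ f then h.exists.choose else ∅

/-- `E A`: the curried equality relation on `A`, i.e.
`{(x, g) ∈ A × (A ⇒ 𝔹) | g = {(y, b) ∈ A × 𝔹 | (x = y → b = ⊤) ∧ (x ≠ y → b = ⊥)}}`. -/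
def E (A : ZFSet) : ZFSet :=
  ZFSet.pairSep
    (fun x g => g = ZFSet.pairSep
      (fun y b => (x = y → b = btrue) ∧ (x ≠ y → b = bfalse)) A bools)
    A (ZFSet.funs A bools)

/-- HOL types: type variables (indexed by `ℕ`), `Bool`, `Ind`, and arrows. -/
inductive HTy : Type
  | tvar (n : ℕ)
  | bool
  | ind
  | arr (a b : HTy)
deriving DecidableEq

/-- HOL terms: typed variables `x : A` (a name together with a type), the polymorphic
equality constant `=_A`, applications, and abstractions `λ(x : A). t`. -/
inductive HTm : Type
  | var (n : ℕ) (ty : HTy)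
  | eq (ty : HTy)
  | app (f t : HTm)
  | lam (n : ℕ) (ty : HTy) (body : HTm)
deriving DecidableEq

/-- Simple typing: `typeOf s = some T` iff `s` is well-typed of type `T`. -/
def typeOf : HTm → Option HTy
  | .var _ ty => some ty
  | .eq ty => some (ty.arr (ty.arr .bool))
  | .app f t =>
    match typeOf f, typeOf t with
    | some (.arr a b), some a' => if a = a' then some b else none
    | _, _ => none
  | .lam _ ty body => (typeOf body).map (fun b => ty.arr b)

/-- Interpretation of HOL types: `⟦X⟧ = α X`, `⟦Bool⟧ = 𝔹`, `⟦Ind⟧ = ω`,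
`⟦A ⟶ B⟧ = ⟦A⟧ ⇒ ⟦B⟧`. -/
def interpTy (αty : ℕ → ZFSet) : HTy → ZFSet
  | .tvar n => αty n
  | .bool => bools
  | .ind => ZFSet.omega
  | .arr a b => ZFSet.funs (interpTy αty a) (interpTy αty b)

/-- Update of a term-variable assignment at the typed variable `(n, ty)`. -/
def updateAssign (αtm : ℕ → HTy → ZFSet) (n : ℕ) (ty : HTy) (v : ZFSet) :
    ℕ → HTy → ZFSet :=
  fun m ty' => if m = n ∧ ty' = ty then v else αtm m ty'

/-- Interpretation of HOL terms: `⟦x : A⟧ = α (x : A)`, `⟦=_A⟧ = E ⟦A⟧`,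
`⟦f t⟧ = app ⟦f⟧ ⟦t⟧`, and
`⟦λ(x : A). t⟧ = {(y, z) ∈ ⟦A⟧ × ⟦B⟧ | z = ⟦t⟧_{α[x ↦ y]}}` where `B` is the type of
`t` (a default is used on ill-typed bodies). -/
noncomputable def interpTm (αty : ℕ → ZFSet) : (ℕ → HTy → ZFSet) → HTm → ZFSet
  | αtm, .var n ty => αtm n ty
  | _, .eq ty => E (interpTy αty ty)
  | αtm, .app f t => app (interpTm αty αtm f) (interpTm αty αtm t)
  | αtm, .lam n ty body =>
    ZFSet.pairSep
      (fun y z => z = interpTm αty (updateAssign αtm n ty y) body)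
      (interpTy αty ty)
      (interpTy αty ((typeOf body).getD .bool))

/-- A valid assignment: every type variable is sent to a nonempty set, and every typed
term variable `x : A` to an element of `⟦A⟧`. -/
def ValidAssign (αty : ℕ → ZFSet) (αtm : ℕ → HTy → ZFSet) : Prop :=
  (∀ n : ℕ, ∃ u : ZFSet, u ∈ αty n) ∧
  (∀ (n : ℕ) (ty : HTy), αtm n ty ∈ interpTy αty ty)

theorem pairSep_mem_funs {p : ZFSet → ZFSet → Prop} {A B : ZFSet}
    (h : ∀ x ∈ A, ∃! y, y ∈ B ∧ p x y) : ZFSet.pairSep p A B ∈ ZFSet.funs A B := by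
  have key : ∀ x y, x.pair y ∈ ZFSet.pairSep p A B ↔ x ∈ A ∧ y ∈ B ∧ p x y := by
    intro x y
    rw [ZFSet.mem_pairSep]
    constructor
    · rintro ⟨a, ha, b, hb, hab, hp⟩
      obtain ⟨rfl, rfl⟩ := ZFSet.pair_inj.1 hab
      exact ⟨ha, hb, hp⟩
    · rintro ⟨hx, hy, hp⟩
      exact ⟨x, hx, y, hy, rfl, hp⟩
  rw [ZFSet.mem_funs]
  refine ⟨fun z hz => ?_, fun x hx => ?_⟩
  · obtain ⟨a, ha, b, hb, rfl, -⟩ := ZFSet.mem_pairSep.1 hz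
    exact ZFSet.pair_mem_prod.2 ⟨ha, hb⟩
  · simpa only [key, hx, true_and] using h x hx

theorem app_mem {A B f x : ZFSet} (hf : f ∈ ZFSet.funs A B) (hx : x ∈ A) : app f x ∈ B := by
  obtain ⟨hsub, huniq⟩ := ZFSet.mem_funs.1 hf
  have h := huniq x hx
  rw [app, dif_pos h]
  exact (ZFSet.pair_mem_prod.1 (hsub h.exists.choose_spec)).2

theorem E_mem (A : ZFSet) : E A ∈ ZFSet.funs A (ZFSet.funs A bools) := by
  refine pairSep_mem_funs fun x _ => ⟨_, ⟨pairSep_mem_funs fun y _ => ?_, rfl⟩, fun g hg => hg.2⟩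
  by_cases hxy : x = y
  · exact ⟨btrue, ⟨by simp [bools], fun _ => rfl, fun h => absurd hxy h⟩,
      fun b hb => hb.2.1 hxy⟩
  · exact ⟨bfalse, ⟨by simp [bools], fun h => absurd h hxy, fun _ => rfl⟩,
      fun b hb => hb.2.2 hxy⟩

theorem ValidAssign.update {αty : ℕ → ZFSet} {αtm : ℕ → HTy → ZFSet} (hα : ValidAssign αty αtm)
    (n : ℕ) (ty : HTy) {v : ZFSet} (hv : v ∈ interpTy αty ty) :
    ValidAssign αty (updateAssign αtm n ty v) := by
  refine ⟨hα.1, fun m ty' => ?_⟩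
  unfold updateAssign
  split_ifs with h
  · exact h.2 ▸ hv
  · exact hα.2 m ty'

theorem typeOf_app {f t : HTm} {T : HTy} (h : typeOf (.app f t) = some T) :
    ∃ a, typeOf f = some (.arr a T) ∧ typeOf t = some a := by
  rw [typeOf] at h
  split at h
  · next a b a' hf ht =>
    split_ifs at h with haa
    obtain rfl := haa
    obtain rfl := Option.some.inj h
    exact ⟨a, hf, ht⟩
  · cases h

/-- (Typing soundness of the set-theoretic interpretation of HOL) For every well-typed
HOL term `s` of type `T` and every (valid) assignment, `⟦s⟧_α ∈ ⟦T⟧_α`. -/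
theorem interp_typing (s : HTm) (T : HTy) (hs : typeOf s = some T)
    (αty : ℕ → ZFSet) (αtm : ℕ → HTy → ZFSet) (hα : ValidAssign αty αtm) :
    interpTm αty αtm s ∈ interpTy αty T := by
  induction s generalizing T αtm with
  | var n ty =>
    obtain rfl := Option.some.inj hs
    exact hα.2 n ty
  | eq ty =>
    obtain rfl := Option.some.inj hs
    exact E_mem _
  | app f t ihf iht =>
    obtain ⟨a, hf, ht⟩ := typeOf_app hs
    exact app_mem (ihf _ hf αtm hα) (iht _ ht αtm hα)
  | lam n ty body ih =>
    obtain ⟨b, hb, rfl⟩ := Option.map_eq_some_iff.1 hs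
    simp only [interpTm, interpTy, hb, Option.getD_some]
    exact pairSep_mem_funs fun y hy =>
      ⟨_, ⟨ih b hb _ (hα.update n ty hy), rfl⟩, fun z hz => hz.2⟩

end HOLDeep
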